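/- arXiv:2206.03533 — 3 statements merged into one kernel-verified Lean document; each statement's English description precedes it below -/
import Mathlib

section
/- Every finitely generated w-FP-projective R-module is finitely presented. -/
open CategoryTheory

universe u

noncomputable section

variable (R : Type u) [CommRing R]

/-- The Ext group `Ext^n_R(M, N)` as an `R`-module (via `ModuleCat`). -/
def extMod (M N : Type u) [AddCommGroup M] [Module R M]
    [AddCommGroup N] [Module R N] (n : ℕ) : ModuleCat R :=
  ((Ext R (ModuleCat R) n).obj (Opposite.op (ModuleCat.of R M))).obj (ModuleCat.of R N)

/-- `J` is a Glaz–Vasconcelos ideal: finitely generated and the natural map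
`R → Hom_R(J, R)` is bijective. -/
def IsGVIdeal (J : Ideal R) : Prop :=
  J.FG ∧ Function.Bijective (fun r : R => (r • J.subtype : J →ₗ[R] R))

/-- A module is GV-torsion if every element is annihilated by some GV-ideal. -/
def IsGVTorsion (M : Type u) [AddCommGroup M] [Module R M] : Prop :=
  ∀ x : M, ∃ J : Ideal R, IsGVIdeal R J ∧ ∀ j ∈ J, j • x = 0

/-- An ideal `I` is a `w`-ideal if it is `w`-closed: whenever `J x ⊆ I` for some
GV-ideal `J`, one has `x ∈ I`. -/
def IsWIdeal (I : Ideal R) : Prop :=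
  ∀ (x : R) (J : Ideal R), IsGVIdeal R J → (∀ j ∈ J, j * x ∈ I) → x ∈ I

/-- `R` is a DW-ring if every maximal ideal is a `w`-ideal. -/
def IsDWRing : Prop :=
  ∀ m : Ideal R, m.IsMaximal → IsWIdeal R m

/-- `A` is absolutely `w`-pure if `Ext^1_R(N, A)` is GV-torsion for every
finitely presented module `N`. -/
def IsAbsolutelyWPure (A : Type u) [AddCommGroup A] [Module R A] : Prop :=
  ∀ (N : Type u) [AddCommGroup N] [Module R N], Module.FinitePresentation R N →
    IsGVTorsion R (extMod R N A 1)

/-- `M` is `w`-FP-projective if `Ext^1_R(M, A) = 0` for every absolutely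
`w`-pure module `A`. -/
def IsWFPProjective (M : Type u) [AddCommGroup M] [Module R M] : Prop :=
  ∀ (A : Type u) [AddCommGroup A] [Module R A], IsAbsolutelyWPure R A →
    Subsingleton (extMod R M A 1)

end

/-!
Write `M = F ⧸ K` with `F` finite free. Embed every quotient `K ⧸ span s`, for `s` a finite subset
of `K`, into an injective module `E s`, and send `x : K` to the family of its images in the `E s`.
This family vanishes as soon as `x ∈ s`, so the map lands in the module `A` of families that vanish
for all large `s`. The components of a map from a finitely generated module to `A` vanish beyond a
single index; as the `E s` are injective, this makes `A` absolutely pure, so `Ext¹(M, A) = 0` and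
`K → A` extends to `F`. Since `F` is finitely generated, the component of the extension at some
index `s` vanishes, that is, `K ⧸ span s = 0`.
-/

section

open Filter Function LinearMap

section Restriction

variable {R : Type*} [Ring R] {F F' M A : Type*}
  [AddCommGroup F] [Module R F] [AddCommGroup F'] [Module R F']
  [AddCommGroup M] [Module R M] [AddCommGroup A] [Module R A]

-- Lift `id_M` to `φ : F → F'` and `ψ : F' → F`. If `h` extends `g ∘ φ` to `F`, then
-- `h ∘ ψ + g ∘ (id - φ ∘ ψ)` extends `g` to `F'`, as `id - φ ∘ ψ` takes values in `ker p'`.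
lemma surjective_domRestrict_ker_of_projective [Module.Projective R F] [Module.Projective R F']
    {p : F →ₗ[R] M} {p' : F' →ₗ[R] M} (hp : Surjective p) (hp' : Surjective p')
    (H : Surjective fun h : F →ₗ[R] A ↦ h.domRestrict (ker p)) :
    Surjective fun h : F' →ₗ[R] A ↦ h.domRestrict (ker p') := by
  intro g
  obtain ⟨φ, hφ⟩ := Module.projective_lifting_property p' p hp'
  obtain ⟨ψ, hψ⟩ := Module.projective_lifting_property p p' hp
  have p_comp_φ (x : F) : p' (φ x) = p x := congr($hφ x)
  have p_comp_ψ (x : F') : p (ψ x) = p' x := congr($hψ x)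
  let φK : ker p →ₗ[R] ker p' := φ.restrict fun x hx ↦ by simpa [p_comp_φ] using hx
  let δ : F' →ₗ[R] ker p' := (LinearMap.id - φ ∘ₗ ψ).codRestrict _ fun x ↦ by
    simp [p_comp_φ, p_comp_ψ]
  obtain ⟨h, hh⟩ := H (g ∘ₗ φK)
  refine ⟨h ∘ₗ ψ + g ∘ₗ δ, LinearMap.ext fun x ↦ ?_⟩
  have hψx : ψ x ∈ ker p := by simp [p_comp_ψ]
  calc h (ψ x) + g (δ x) = g (φK ⟨ψ x, hψx⟩) + g (δ x) := congr($hh ⟨ψ x, hψx⟩ + g (δ x))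
    _ = g (φK ⟨ψ x, hψx⟩ + δ x) := (map_add g _ _).symm
    _ = g x := congrArg g (Subtype.ext (by simp [φK, δ]))

lemma forall_exists_comp_eq_iff_of_exact {L₀ L₁ L₂ : Type*}
    [AddCommGroup L₀] [Module R L₀] [AddCommGroup L₁] [Module R L₁] [AddCommGroup L₂] [Module R L₂]
    {f : L₂ →ₗ[R] L₁} {g : L₁ →ₗ[R] L₀} (hfg : Exact f g) :
    (∀ φ : L₁ →ₗ[R] A, φ ∘ₗ f = 0 → ∃ h : L₀ →ₗ[R] A, h ∘ₗ g = φ) ↔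
      Surjective fun h : L₀ →ₗ[R] A ↦ h.domRestrict (range g) := by
  constructor
  · intro H ψ
    have zero : (ψ ∘ₗ g.rangeRestrict) ∘ₗ f = 0 := by
      ext x
      have : g.rangeRestrict (f x) = 0 := Subtype.ext (hfg.apply_apply_eq_zero x)
      simp [this]
    obtain ⟨h, hh⟩ := H _ zero
    refine ⟨h, LinearMap.ext ?_⟩
    rintro ⟨_, x, rfl⟩
    exact congr($hh x)
  · intro H φ hφ
    have ker_le : ker g ≤ ker φ := by
      rw [hfg.linearMap_ker_eq, range_le_ker_iff, hφ]
    obtain ⟨h, hh⟩ := H ((ker g).liftQ φ ker_le ∘ₗ g.quotKerEquivRange.symm.toLinearMap)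
    refine ⟨h, LinearMap.ext fun x ↦ ?_⟩
    calc h (g x) = (ker g).liftQ φ ker_le (g.quotKerEquivRange.symm ⟨g x, x, rfl⟩) :=
          congr($hh ⟨g x, x, rfl⟩)
      _ = φ x := congrArg _ (quotKerEquivRange_symm_apply_image g x _)

end Restriction

section EventuallyZero

variable (R : Type*) [Semiring R] {ι : Type*} (l : Filter ι) (E : ι → Type*)
  [∀ i, AddCommMonoid (E i)] [∀ i, Module R (E i)]

/-- The submodule of `∏ i, E i` of the families that vanish eventually along the filter `l`. For
the cofinite filter this is the direct sum, and for `l = ⊤` it is zero. -/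
def eventuallyZero : Submodule R (∀ i, E i) where
  carrier := {f | ∀ᶠ i in l, f i = 0}
  zero_mem' := .of_forall fun _ ↦ rfl
  add_mem' hf hg := by filter_upwards [hf, hg] with i hf hg using by simp [hf, hg]
  smul_mem' r _ hf := by filter_upwards [hf] with i hf using by simp [hf]

namespace eventuallyZero

variable {R l E} {F : Type*} [AddCommMonoid F] [Module R F]

lemma eventually_proj_comp_eq_zero [Module.Finite R F] (h : F →ₗ[R] eventuallyZero R l E) :
    ∀ᶠ i in l, proj i ∘ₗ (eventuallyZero R l E).subtype ∘ₗ h = 0 := by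
  obtain ⟨s, hs⟩ := Module.Finite.fg_top (R := R) (M := F)
  have on_generators : ∀ᶠ i in l, ∀ x ∈ s, (h x : ∀ i, E i) i = 0 :=
    (eventually_all_finset s).2 fun x _ ↦ (h x).2
  filter_upwards [on_generators] with i hi
  exact LinearMap.ext_on hs hi

lemma surjective_domRestrict {K : Submodule R F} (hK : K.FG)
    (hE : ∀ i, Surjective fun h : F →ₗ[R] E i ↦ h.domRestrict K) :
    Surjective fun h : F →ₗ[R] eventuallyZero R l E ↦ h.domRestrict K := by
  intro g
  have : Module.Finite R K := .of_fg hK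
  let gᵢ (i : ι) : K →ₗ[R] E i := proj i ∘ₗ (eventuallyZero R l E).subtype ∘ₗ g
  have extension (i : ι) : ∃ h : F →ₗ[R] E i, h.domRestrict K = gᵢ i ∧ (gᵢ i = 0 → h = 0) := by
    by_cases hi : gᵢ i = 0
    · exact ⟨0, hi.symm, fun _ ↦ rfl⟩
    · obtain ⟨h, hh⟩ := hE i (gᵢ i)
      exact ⟨h, hh, fun hi' ↦ absurd hi' hi⟩
  choose h h_extends h_zero using extension
  have h_mem (x : F) : pi h x ∈ eventuallyZero R l E := by
    filter_upwards [eventually_proj_comp_eq_zero g] with i hi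
    simp [h_zero i hi]
  refine ⟨(pi h).codRestrict _ h_mem, ?_⟩
  ext x i
  exact congr($(h_extends i) x)

end eventuallyZero

end EventuallyZero

section FinitelyGenerated

variable {R : Type*} [Ring R]

/-- The linear map sending `x` to the family of the images in `E s` of its classes modulo the spans
of the finite subsets `s` of `K`. -/
def toEventuallyZero {K : Type*} [AddCommGroup K] [Module R K]
    {E : Finset K → Type*} [∀ s, AddCommGroup (E s)] [∀ s, Module R (E s)]
    (f : ∀ s : Finset K, (K ⧸ Submodule.span R (s : Set K)) →ₗ[R] E s) :
    K →ₗ[R] eventuallyZero R atTop E :=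
  (pi fun s ↦ f s ∘ₗ (Submodule.span R (s : Set K)).mkQ).codRestrict _ fun x ↦ by
    filter_upwards [eventually_ge_atTop {x}] with s hs
    have hx : x ∈ Submodule.span R (s : Set K) := Submodule.subset_span (by simpa using hs)
    simp [(Submodule.Quotient.mk_eq_zero _).2 hx]

lemma fg_of_surjective_domRestrict {F : Type*} [AddCommGroup F] [Module R F]
    [Module.Finite R F] (K : Submodule R F)
    {E : Finset K → Type*} [∀ s, AddCommGroup (E s)] [∀ s, Module R (E s)]
    {f : ∀ s : Finset K, (K ⧸ Submodule.span R (s : Set K)) →ₗ[R] E s} (hf : ∀ s, Injective (f s))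
    (H : Surjective fun h : F →ₗ[R] eventuallyZero R atTop E ↦ h.domRestrict K) : K.FG := by
  obtain ⟨h, hh⟩ := H (toEventuallyZero f)
  obtain ⟨s, hs⟩ := (eventuallyZero.eventually_proj_comp_eq_zero h).exists
  have span_eq_top : Submodule.span R (s : Set K) = ⊤ := by
    refine eq_top_iff.2 fun x _ ↦ ?_
    have f_mk_eq_zero : f s (Submodule.Quotient.mk x) = 0 :=
      calc f s (Submodule.Quotient.mk x) = (h x : ∀ s, E s) s := congr(($hh.symm x : ∀ s, E s) s)
        _ = 0 := congr($hs x)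
    exact (Submodule.Quotient.mk_eq_zero _).1 ((map_eq_zero_iff _ (hf s)).1 f_mk_eq_zero)
  exact (Submodule.fg_top K).1 ⟨s, span_eq_top⟩

end FinitelyGenerated

lemma exists_injective_linearMap_injective.{v, w} (R : Type v) [Ring R] [Small.{w} R] (M : Type w)
    [AddCommGroup M] [Module R M] :
    ∃ (E : ModuleCat.{w} R) (f : M →ₗ[R] E), Module.Injective R E ∧ Injective f :=
  ⟨Injective.under (ModuleCat.of R M), (Injective.ι (ModuleCat.of R M)).hom,
    (Module.injective_iff_injective_object R _).2 (Injective.injective_under (ModuleCat.of R M)),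
    (ModuleCat.mono_iff_injective _).1 inferInstance⟩

section Ext

variable {R : Type u} [CommRing R] {F M A : Type u} [AddCommGroup F] [Module R F]
  [AddCommGroup M] [Module R M] [AddCommGroup A] [Module R A]

lemma subsingleton_extMod_one_iff_of_projectiveResolution
    (P : ProjectiveResolution (ModuleCat.of R M)) :
    Subsingleton (extMod R M A 1) ↔
      ∀ φ : P.complex.X 1 →ₗ[R] A, φ ∘ₗ (P.complex.d 2 1).hom = 0 →
        ∃ h : P.complex.X 0 →ₗ[R] A, h ∘ₗ (P.complex.d 1 0).hom = φ := by
  rw [← ModuleCat.isZero_iff_subsingleton, extMod, (P.isoExt 1 (ModuleCat.of R A)).isZero_iff,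
    ← HomologicalComplex.exactAt_iff_isZero_homology,
    HomologicalComplex.exactAt_iff' _ 0 1 2 (by simp) (by simp),
    ShortComplex.moduleCat_exact_iff]
  constructor
  · intro H φ hφ
    obtain ⟨h, hh⟩ := H (ModuleCat.ofHom φ) (ModuleCat.hom_ext hφ)
    exact ⟨h.hom, congr(ModuleCat.Hom.hom $hh)⟩
  · intro H φ hφ
    obtain ⟨h, hh⟩ := H φ.hom congr(ModuleCat.Hom.hom $hφ)
    exact ⟨ModuleCat.ofHom h, ModuleCat.hom_ext hh⟩

lemma subsingleton_extMod_one_iff [Module.Projective R F] {p : F →ₗ[R] M} (hp : Surjective p) :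
    Subsingleton (extMod R M A 1) ↔ Surjective fun h : F →ₗ[R] A ↦ h.domRestrict (ker p) := by
  let P : ProjectiveResolution (ModuleCat.of R M) := projectiveResolution _
  let π : P.complex.X 0 →ₗ[R] M := (P.π.f 0).hom
  have hπ : Surjective π := (ModuleCat.epi_iff_surjective (P.π.f 0)).1 inferInstance
  have : Module.Projective R (P.complex.X 0) :=
    (IsProjective.iff_projective (P.complex.X 0)).2 (P.projective 0)
  have exact_one : Exact (P.complex.d 2 1).hom (P.complex.d 1 0).hom :=
    (ShortComplex.ShortExact.moduleCat_exact_iff_function_exact _).1 (P.exact_succ 0)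
  have range_d : range (P.complex.d 1 0).hom = ker π := P.exact₀.moduleCat_range_eq_ker
  rw [subsingleton_extMod_one_iff_of_projectiveResolution P,
    forall_exists_comp_eq_iff_of_exact exact_one, range_d]
  exact ⟨surjective_domRestrict_ker_of_projective hπ hp,
    surjective_domRestrict_ker_of_projective hp hπ⟩

end Ext

section GVTorsion

variable {R : Type u} [CommRing R]

lemma isGVIdeal_top : IsGVIdeal R ⊤ := by
  refine ⟨Module.Finite.fg_top, fun r s hrs ↦ ?_, fun f ↦ ⟨f ⟨1, trivial⟩, ?_⟩⟩
  · simpa using congr($hrs ⟨1, trivial⟩)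
  · ext x
    calc f ⟨1, trivial⟩ * (x : R) = (x : R) * f ⟨1, trivial⟩ := mul_comm _ _
      _ = f ((x : R) • ⟨1, trivial⟩) := (map_smul f _ _).symm
      _ = f x := congrArg f (Subtype.ext (mul_one _))

lemma isGVTorsion_of_subsingleton (M : Type u) [AddCommGroup M] [Module R M] [Subsingleton M] :
    IsGVTorsion R M :=
  fun _ ↦ ⟨⊤, isGVIdeal_top, fun _ _ ↦ Subsingleton.elim _ _⟩

end GVTorsion

section AbsolutelyPure

variable (R : Type u) [CommRing R]

/-- `A` is absolutely pure (FP-injective) if `Ext^1_R(N, A) = 0` for every finitely presented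
module `N`. -/
def IsAbsolutelyPure (A : Type u) [AddCommGroup A] [Module R A] : Prop :=
  ∀ (N : Type u) [AddCommGroup N] [Module R N], Module.FinitePresentation R N →
    Subsingleton (extMod R N A 1)

/-- `M` is FP-projective if `Ext^1_R(M, A) = 0` for every absolutely pure module `A`. -/
def IsFPProjective (M : Type u) [AddCommGroup M] [Module R M] : Prop :=
  ∀ (A : Type u) [AddCommGroup A] [Module R A], IsAbsolutelyPure R A →
    Subsingleton (extMod R M A 1)

variable {R}

lemma IsAbsolutelyPure.isAbsolutelyWPure {A : Type u} [AddCommGroup A] [Module R A]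
    (hA : IsAbsolutelyPure R A) : IsAbsolutelyWPure R A := fun N _ _ hN ↦
  have := hA N hN
  isGVTorsion_of_subsingleton _

lemma IsWFPProjective.isFPProjective {M : Type u} [AddCommGroup M] [Module R M]
    (hM : IsWFPProjective R M) : IsFPProjective R M :=
  fun A _ _ hA ↦ hM A hA.isAbsolutelyWPure

lemma isAbsolutelyPure_of_injective (E : Type u) [AddCommGroup E] [Module R E]
    [Module.Injective R E] : IsAbsolutelyPure R E := by
  intro N _ _ _
  obtain ⟨n, p, hp⟩ := Module.Finite.exists_fin' R N
  exact (subsingleton_extMod_one_iff hp).2 fun g ↦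
    Module.Injective.extension_property R _ _ _ (ker p).subtype (ker p).injective_subtype g

lemma isAbsolutelyPure_eventuallyZero {ι : Type u} (l : Filter ι) {E : ι → Type u}
    [∀ i, AddCommGroup (E i)] [∀ i, Module R (E i)] (hE : ∀ i, IsAbsolutelyPure R (E i)) :
    IsAbsolutelyPure R (eventuallyZero R l E) := by
  intro N _ _ hN
  obtain ⟨n, p, hp⟩ := Module.Finite.exists_fin' R N
  exact (subsingleton_extMod_one_iff hp).2 <| eventuallyZero.surjective_domRestrict
    (Module.FinitePresentation.fg_ker p hp)
    fun i ↦ (subsingleton_extMod_one_iff hp).1 (hE i N hN)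

end AbsolutelyPure

theorem finitePresentation_of_wFPProjective_general {R : Type u} [CommRing R] {M : Type u}
    [AddCommGroup M] [Module R M] [Module.Finite R M] (hM : IsFPProjective R M) :
    Module.FinitePresentation R M := by
  obtain ⟨n, p, hp⟩ := Module.Finite.exists_fin' R M
  choose E f hE hf using fun s : Finset (ker p) ↦
    exists_injective_linearMap_injective R (ker p ⧸ Submodule.span R (s : Set (ker p)))
  have vanishing_families_pure : IsAbsolutelyPure R (eventuallyZero R atTop fun s ↦ E s) :=
    isAbsolutelyPure_eventuallyZero _ fun s ↦ isAbsolutelyPure_of_injective (E s)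
  have ker_fg : (ker p).FG :=
    fg_of_surjective_domRestrict (ker p) hf <|
      (subsingleton_extMod_one_iff hp).1 (hM _ vanishing_families_pure)
  exact Module.finitePresentation_of_surjective p hp ker_fg

end

/-- Every finitely generated `w`-FP-projective module is finitely presented. -/
theorem finitePresentation_of_wFPProjective (R : Type u) [CommRing R]
    (M : Type u) [AddCommGroup M] [Module R M] [Module.Finite R M]
    (hM : IsWFPProjective R M) : Module.FinitePresentation R M :=
  finitePresentation_of_wFPProjective_general hM.isFPProjective
end

section
/- If M is a w-FP-projective R-module such that Ext^1_R(M,G)=0 for every GV-torsion-free R-module G, then M is projective. -/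
open CategoryTheory

universe u

/-- A module is GV-torsion-free if no nonzero element is annihilated by a GV-ideal. -/
def IsGVTorsionFree (R : Type u) [CommRing R]
    (G : Type u) [AddCommGroup G] [Module R G] : Prop :=
  ∀ x : G, (∃ J : Ideal R, IsGVIdeal R J ∧ ∀ j ∈ J, j • x = 0) → x = 0

/-!
Every module `A` is an extension of the GV-torsion-free module `A ⧸ T` by its GV-torsion submodule
`T`, so `Ext¹(M, A)` vanishes as soon as `Ext¹(M, -)` vanishes on both kinds of modules. A
GV-torsion module `T` is absolutely `w`-pure because a finitely presented `N` has a presentation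
`0 → K → Rⁿ → N → 0` with `K` finitely generated: `Hom(K, T)` is then GV-torsion, and it surjects
onto `Ext¹(N, T)`.
-/

section ExtComparison

open Abelian

variable {R C : Type*} [Ring R] [Category* C] [Abelian C] [Linear R C] [HasExt C] {X Y : C}
  (P : ProjectiveResolution X)

theorem smul_extMk (r : R) {n m : ℕ} (f : P.complex.X n ⟶ Y) (hm : n + 1 = m)
    (hf : P.complex.d m n ≫ f = 0) :
    r • P.extMk f m hm hf = P.extMk (r • f) m hm (by simp [hf]) := by
  simp [Ext.smul_eq_comp_mk₀, P.extMk_comp_mk₀]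

variable (R Y) in
/-- The short complex `Hom(Pₙ, Y) ⟶ Hom(Pₙ₊₁, Y) ⟶ Hom(Pₙ₊₂, Y)`. -/
abbrev homShortComplex (n : ℕ) : ShortComplex (ModuleCat R) :=
  (P.complex.linearYonedaObj R Y).sc' n (n + 1) (n + 2)

variable (R Y) in
/-- The map sending a cocycle `f : Pₙ₊₁ ⟶ Y` to its class in `Ext X Y (n + 1)`. -/
noncomputable def cocyclesToExt (n : ℕ) :
    LinearMap.ker (homShortComplex R Y P n).g.hom →ₗ[R] Ext X Y (n + 1) where
  toFun f := P.extMk f.1 (n + 2) rfl f.2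
  map_add' f g := (P.add_extMk f.1 g.1 _ rfl f.2 g.2).symm
  map_smul' r f := (smul_extMk P r f.1 rfl f.2).symm

theorem cocyclesToExt_surjective (n : ℕ) : Function.Surjective (cocyclesToExt R Y P n) := by
  intro α
  obtain ⟨f, hf, rfl⟩ := P.extMk_surjective α (n + 2) rfl
  exact ⟨⟨f, hf⟩, rfl⟩

theorem ker_cocyclesToExt (n : ℕ) :
    LinearMap.ker (cocyclesToExt R Y P n) =
      LinearMap.range (homShortComplex R Y P n).moduleCatToCycles := by
  ext f
  rw [LinearMap.mem_ker, LinearMap.mem_range]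
  refine (P.extMk_eq_zero_iff f.1 (n + 2) rfl f.2 n rfl).trans ?_
  exact exists_congr fun g => ⟨fun h => Subtype.ext h, fun h => congrArg Subtype.val h⟩

variable (R X Y) in
/-- The derived functor `Ext` and the `Ext` of the derived category agree in positive degrees. -/
noncomputable def extSuccLinearEquiv [EnoughProjectives C] (n : ℕ) :
    ((_root_.Ext R C (n + 1)).obj (Opposite.op X)).obj Y ≃ₗ[R] Ext X Y (n + 1) :=
  let P := projectiveResolution X
  (P.isoExt (n + 1) Y ≪≫
      (P.complex.linearYonedaObj R Y).homologyIsoSc' n (n + 1) (n + 2) (by simp) (by simp) ≪≫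
      (homShortComplex R Y P n).moduleCatHomologyIso).toLinearEquiv ≪≫ₗ
    Submodule.quotEquivOfEq _ _ (ker_cocyclesToExt P n).symm ≪≫ₗ
    (cocyclesToExt R Y P n).quotKerEquivOfSurjective (cocyclesToExt_surjective P n)

end ExtComparison

section ExtMod

variable {R : Type u} [CommRing R]

variable (R) in
/-- `extMod R M N (n + 1)` as an `Ext` of the derived category, for which Mathlib has the long exact
sequences. -/
noncomputable def extModSuccLinearEquiv (M N : Type u) [AddCommGroup M] [Module R M]
    [AddCommGroup N] [Module R N] (n : ℕ) :
    extMod R M N (n + 1) ≃ₗ[R] Abelian.Ext (ModuleCat.of R M) (ModuleCat.of R N) (n + 1) :=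
  extSuccLinearEquiv R (ModuleCat.of R M) (ModuleCat.of R N) n

variable {M A : Type u} [AddCommGroup M] [Module R M] [AddCommGroup A] [Module R A]

theorem projective_of_forall_subsingleton_extMod_one
    (h : ∀ (A : Type u) [AddCommGroup A] [Module R A], Subsingleton (extMod R M A 1)) :
    Module.Projective R M := by
  rw [IsProjective.iff_projective, projective_iff_subsingleton_ext_one]
  intro Y
  have := h Y
  exact (extModSuccLinearEquiv R M Y 0).symm.toEquiv.subsingleton

theorem subsingleton_extMod_succ_of_submodule (T : Submodule R A) (n : ℕ)
    (hT : Subsingleton (extMod R M T (n + 1))) (hQ : Subsingleton (extMod R M (A ⧸ T) (n + 1))) :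
    Subsingleton (extMod R M A (n + 1)) := by
  let S := ModuleCat.shortComplexOfCompEqZero T.subtype T.mkQ
    (LinearMap.exact_subtype_mkQ T).linearMap_comp_eq_zero
  have hS : S.ShortExact := ModuleCat.shortComplex_shortExact S (LinearMap.exact_subtype_mkQ T)
    T.injective_subtype T.mkQ_surjective
  have hT' := (extModSuccLinearEquiv R M T n).symm.toEquiv.subsingleton
  have hQ' := (extModSuccLinearEquiv R M (A ⧸ T) n).symm.toEquiv.subsingleton
  refine (extModSuccLinearEquiv R M A n).toEquiv.subsingleton_congr.2
    (subsingleton_of_forall_eq 0 fun x => ?_)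
  obtain ⟨y, rfl⟩ := Abelian.Ext.covariant_sequence_exact₂ _ hS x (hQ'.elim _ _)
  rw [hT'.elim y 0, Abelian.Ext.zero_comp]

theorem exists_surjective_ker_linearMap_to_extMod_one {P : Type u} [AddCommGroup P] [Module R P]
    [Module.Projective R P] {p : P →ₗ[R] M} (hp : Function.Surjective p) :
    ∃ δ : (LinearMap.ker p →ₗ[R] A) →ₗ[R] extMod R M A 1, Function.Surjective δ := by
  let K := ModuleCat.of R (LinearMap.ker p)
  let e₀ : (LinearMap.ker p →ₗ[R] A) ≃ₗ[R] Abelian.Ext K (ModuleCat.of R A) 0 :=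
    (ModuleCat.homLinearEquiv (S := R) (M := K) (N := .of R A)).symm ≪≫ₗ
      Abelian.Ext.linearEquiv₀.symm
  have hS := LinearMap.shortExact_shortComplexKer hp
  have : Projective p.shortComplexKer.X₂ := (IsProjective.iff_projective P).1 inferInstance
  let δ := hS.extClass.precompOfLinear R (ModuleCat.of R A) (add_zero 1)
  have hδ : Function.Surjective δ := precomp_extClass_surjective_of_projective_X₂ _ hS 0
  exact ⟨(extModSuccLinearEquiv R M A 0).symm.toLinearMap ∘ₗ δ ∘ₗ e₀.toLinearMap,
    (extModSuccLinearEquiv R M A 0).symm.surjective.comp (hδ.comp e₀.surjective)⟩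

end ExtMod

section GVTorsion

variable {R : Type u} [CommRing R]

namespace IsGVIdeal

theorem top : IsGVIdeal R ⊤ := by
  refine ⟨Module.Finite.fg_top, fun r s h => ?_, fun f => ⟨f ⟨1, trivial⟩, ?_⟩⟩
  · simpa using LinearMap.congr_fun h ⟨1, trivial⟩
  · ext x
    have hx : x = (x : R) • (⟨1, trivial⟩ : (⊤ : Ideal R)) := by ext; simp
    conv_rhs => rw [hx, map_smul]
    simp [mul_comm]

-- `Hom(IJ, R)` embeds into `Hom(I, Hom(J, R)) ≅ Hom(I, R) ≅ R`.
theorem mul {I J : Ideal R} (hI : IsGVIdeal R I) (hJ : IsGVIdeal R J) : IsGVIdeal R (I * J) := by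
  let e : R ≃ₗ[R] (J →ₗ[R] R) :=
    LinearEquiv.ofBijective ((LinearMap.lsmul R (J →ₗ[R] R)).flip J.subtype) hJ.2
  let uncurried (f : ↥(I * J) →ₗ[R] R) : I →ₗ[R] J →ₗ[R] R :=
    TensorProduct.curry (f ∘ₗ Submodule.mulMap' I J)
  have uncurried_injective : Function.Injective uncurried := by
    intro f g h
    have := TensorProduct.curry_injective h
    exact (LinearMap.cancel_right (Submodule.mulMap'_surjective I J)).1 this
  have uncurried_smul :
      uncurried ∘ (fun r : R => r • (I * J).subtype) =
        (fun g : I →ₗ[R] R => e.toLinearMap ∘ₗ g) ∘ (fun r : R => r • I.subtype) := by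
    ext r i j
    simp [uncurried, e, mul_assoc]
  have h : Function.Bijective (uncurried ∘ fun r : R => r • (I * J).subtype) := by
    rw [uncurried_smul]
    exact (e.congrRight (M := I)).bijective.comp hI.2
  exact ⟨hI.1.mul hJ.1, h.1.of_comp, h.2.of_comp_left uncurried_injective⟩

end IsGVIdeal

variable (R) in
/-- The GV-torsion submodule of `M`: the elements annihilated by some GV-ideal. -/
def gvTorsion (M : Type*) [AddCommGroup M] [Module R M] : Submodule R M where
  carrier := {x | ∃ J : Ideal R, IsGVIdeal R J ∧ ∀ j ∈ J, j • x = 0}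
  zero_mem' := ⟨⊤, .top, by simp⟩
  add_mem' := by
    rintro x y ⟨I, hI, hx⟩ ⟨J, hJ, hy⟩
    refine ⟨I * J, hI.mul hJ, fun a ha => ?_⟩
    rw [smul_add, hx a (Ideal.mul_le_left ha), hy a (Ideal.mul_le_right ha), add_zero]
  smul_mem' := by
    rintro r x ⟨J, hJ, hx⟩
    exact ⟨J, hJ, fun j hj => by rw [smul_comm, hx j hj, smul_zero]⟩

theorem exists_isGVIdeal_le_annihilator {M : Type*} [AddCommGroup M] [Module R M]
    {N : Submodule R M} (hN : N.FG) (hT : N ≤ gvTorsion R M) :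
    ∃ J : Ideal R, IsGVIdeal R J ∧ J ≤ N.annihilator := by
  induction N, hN using Submodule.fg_induction with
  | singleton x =>
    obtain ⟨J, hJ, hx⟩ := hT (Submodule.mem_span_singleton_self x)
    exact ⟨J, hJ, fun j hj => (Submodule.mem_annihilator_span_singleton x j).2 (hx j hj)⟩
  | sup N₁ N₂ _ _ ih₁ ih₂ =>
    obtain ⟨J₁, hJ₁, h₁⟩ := ih₁ (le_sup_left.trans hT)
    obtain ⟨J₂, hJ₂, h₂⟩ := ih₂ (le_sup_right.trans hT)
    refine ⟨J₁ * J₂, hJ₁.mul hJ₂, ?_⟩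
    rw [Submodule.annihilator_sup]
    exact le_inf (Ideal.mul_le_left.trans h₁) (Ideal.mul_le_right.trans h₂)

variable {M A : Type u} [AddCommGroup M] [Module R M] [AddCommGroup A] [Module R A]

theorem isGVTorsion_gvTorsion : IsGVTorsion R (gvTorsion R M) := by
  rintro ⟨x, J, hJ, hx⟩
  exact ⟨J, hJ, fun j hj => Subtype.ext (hx j hj)⟩

theorem isGVTorsionFree_quotient_gvTorsion : IsGVTorsionFree R (M ⧸ gvTorsion R M) := by
  intro y
  obtain ⟨x, rfl⟩ := (gvTorsion R M).mkQ_surjective y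
  rintro ⟨J, hJ, hx⟩
  have hJx : Submodule.map (LinearMap.toSpanSingleton R M x) J ≤ gvTorsion R M := by
    rintro _ ⟨j, hj, rfl⟩
    exact (Submodule.Quotient.mk_eq_zero _).1 (hx j hj)
  obtain ⟨I, hI, hIJx⟩ := exists_isGVIdeal_le_annihilator (Submodule.FG.map _ hJ.1) hJx
  refine (Submodule.Quotient.mk_eq_zero _).2 ⟨I * J, hI.mul hJ, fun a ha => ?_⟩
  induction ha using Submodule.mul_induction_on' with
  | mem_mul_mem i hi j hj =>
    rw [mul_smul]
    exact Submodule.mem_annihilator.1 (hIJx hi) _ ⟨j, hj, rfl⟩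
  | add a _ b _ ha hb => rw [add_smul, ha, hb, add_zero]

namespace IsGVTorsion

theorem of_surjective (hM : IsGVTorsion R M) {f : M →ₗ[R] A} (hf : Function.Surjective f) :
    IsGVTorsion R A := by
  intro y
  obtain ⟨x, rfl⟩ := hf y
  obtain ⟨J, hJ, hx⟩ := hM x
  exact ⟨J, hJ, fun j hj => by rw [← map_smul, hx j hj, map_zero]⟩

theorem linearMap [Module.Finite R M] (hA : IsGVTorsion R A) : IsGVTorsion R (M →ₗ[R] A) := by
  intro f
  obtain ⟨J, hJ, hf⟩ := exists_isGVIdeal_le_annihilator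
    (Module.Finite.iff_fg.1 (inferInstance : Module.Finite R (LinearMap.range f))) fun x _ => hA x
  exact ⟨J, hJ, fun j hj => LinearMap.ext fun x =>
    Submodule.mem_annihilator.1 (hf hj) _ (LinearMap.mem_range_self f x)⟩

theorem isAbsolutelyWPure (hA : IsGVTorsion R A) : IsAbsolutelyWPure R A := by
  intro N _ _ _
  obtain ⟨n, p, hp⟩ := Module.Finite.exists_fin' R N
  have : Module.Finite R (LinearMap.ker p) :=
    Module.Finite.iff_fg.2 (Module.FinitePresentation.fg_ker p hp)
  obtain ⟨δ, hδ⟩ := exists_surjective_ker_linearMap_to_extMod_one (A := A) hp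
  exact hA.linearMap.of_surjective hδ

end IsGVTorsion

end GVTorsion

theorem projective_of_wFPProjective_general (R : Type u) [CommRing R]
    (M : Type u) [AddCommGroup M] [Module R M]
    (hT : ∀ (T : Type u) [AddCommGroup T] [Module R T], IsGVTorsion R T →
      Subsingleton (extMod R M T 1))
    (hG : ∀ (G : Type u) [AddCommGroup G] [Module R G], IsGVTorsionFree R G →
      Subsingleton (extMod R M G 1)) :
    Module.Projective R M :=
  projective_of_forall_subsingleton_extMod_one fun A _ _ =>
    subsingleton_extMod_succ_of_submodule (gvTorsion R A) 0
      (hT _ isGVTorsion_gvTorsion) (hG _ isGVTorsionFree_quotient_gvTorsion)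

/-- A `w`-FP-projective module with `Ext^1` vanishing against all GV-torsion-free
modules is projective. -/
theorem projective_of_wFPProjective (R : Type u) [CommRing R]
    (M : Type u) [AddCommGroup M] [Module R M] (hM : IsWFPProjective R M)
    (hG : ∀ (G : Type u) [AddCommGroup G] [Module R G], IsGVTorsionFree R G →
      Subsingleton (extMod R M G 1)) :
    Module.Projective R M :=
  projective_of_wFPProjective_general R M (fun T _ _ hT => hM T hT.isAbsolutelyWPure) hG
end

section
/- Let R be a coherent ring. An R-module A is absolutely w-pure if and only if Ext^{n+1}_R(N,A) is GV-torsion for every finitely presented module N and every integer n ≥ 0. -/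
open CategoryTheory

universe u

/-- `R` is coherent: every finitely generated ideal is finitely presented. -/
def IsCoherentRing (R : Type u) [CommRing R] : Prop :=
  ∀ I : Ideal R, I.FG → Module.FinitePresentation R I

/-!
Choose a surjection `Rᵏ → N` with finitely generated kernel `K`. Over a coherent ring every
finitely generated submodule of `Rᵏ` is finitely presented, so `K` is again finitely presented.
Splicing `0 → K → Rᵏ → N → 0` onto a projective resolution of `K` gives
`Ext^{n+2}(N, A) ≅ Ext^{n+1}(K, A)`, and the claim follows by induction on `n`.
-/

section PseudoCoherent

universe v w

/-- A module is pseudo-coherent if all of its finitely generated submodules are finitely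
presented. The module itself need not be finitely generated. -/
def IsPseudoCoherent (R : Type*) [Ring R] (M : Type*) [AddCommGroup M] [Module R M] : Prop :=
  ∀ K : Submodule R M, K.FG → Module.FinitePresentation R K

namespace IsPseudoCoherent

variable {R : Type*} [Ring R] {M N : Type*} [AddCommGroup M] [Module R M]
  [AddCommGroup N] [Module R N]

theorem finitePresentation_of_injective (hN : IsPseudoCoherent R N) [Module.Finite R M]
    {f : M →ₗ[R] N} (hf : Function.Injective f) : Module.FinitePresentation R M :=
  have := hN (LinearMap.range f) (Module.Finite.iff_fg.1 inferInstance)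
  .of_equiv (LinearEquiv.ofInjective f hf).symm

theorem of_injective (hN : IsPseudoCoherent R N) {f : M →ₗ[R] N} (hf : Function.Injective f) :
    IsPseudoCoherent R M := fun K hK =>
  have := Module.Finite.iff_fg.2 hK
  hN.finitePresentation_of_injective (f := f ∘ₗ K.subtype) (hf.comp K.injective_subtype)

theorem of_ker (f : M →ₗ[R] N) (hker : IsPseudoCoherent R (LinearMap.ker f))
    (hN : IsPseudoCoherent R N) : IsPseudoCoherent R M := by
  intro K hK
  have : Module.Finite R K := Module.Finite.iff_fg.2 hK
  let g : K →ₗ[R] K.map f := f.submoduleMap K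
  have hg : Function.Surjective g := f.submoduleMap_surjective K
  have : Module.FinitePresentation R (K.map f) := hN _ (hK.map f)
  have : Module.Finite R (LinearMap.ker g) :=
    Module.Finite.iff_fg.2 (Module.FinitePresentation.fg_ker g hg)
  let i : LinearMap.ker g →ₗ[R] LinearMap.ker f :=
    (K.subtype ∘ₗ (LinearMap.ker g).subtype).codRestrict _
      fun x => congrArg Subtype.val (LinearMap.mem_ker.1 x.2)
  have hi : Function.Injective i := (LinearMap.injective_codRestrict_iff _).2 <|
    K.injective_subtype.comp (LinearMap.ker g).injective_subtype
  have : Module.FinitePresentation R (LinearMap.ker g) := hker.finitePresentation_of_injective hi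
  exact Module.finitePresentation_of_ker g hg

theorem prod (hM : IsPseudoCoherent R M) (hN : IsPseudoCoherent R N) :
    IsPseudoCoherent R (M × N) := by
  refine of_ker (LinearMap.fst R M N) ?_ hM
  refine hN.of_injective (f := LinearMap.snd R M N ∘ₗ (LinearMap.ker _).subtype) ?_
  exact fun x y h => Subtype.ext (Prod.ext ((LinearMap.mem_ker.1 x.2).trans
    (LinearMap.mem_ker.1 y.2).symm) h)

theorem pi {ι : Type v} [Finite ι] {M : ι → Type w} [∀ i, AddCommGroup (M i)]
    [∀ i, Module R (M i)] (hM : ∀ i, IsPseudoCoherent R (M i)) :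
    IsPseudoCoherent R (∀ i, M i) :=
  Module.pi_induction' R (fun N _ _ => IsPseudoCoherent R N) (fun N _ _ => IsPseudoCoherent R N)
    (fun e h => h.of_injective e.symm.injective) (fun e h => h.of_injective e.symm.injective)
    (fun _ _ => inferInstance) prod M hM

end IsPseudoCoherent

end PseudoCoherent

section DimensionShift

open Limits

section HasZeroMorphisms

variable {C : Type*} [Category C] [HasZeroMorphisms C]

theorem exact_epi_comp {S : ShortComplex C} (hS : S.Exact) {X : C} (p : X ⟶ S.X₁) [Epi p] :
    (ShortComplex.mk (p ≫ S.f) S.g (by simp)).Exact := by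
  let φ : ShortComplex.mk (p ≫ S.f) S.g (by simp) ⟶ S := { τ₁ := p, τ₂ := 𝟙 _, τ₃ := 𝟙 _ }
  have : Epi φ.τ₁ := ‹Epi p›
  have : IsIso φ.τ₂ := inferInstanceAs (IsIso (𝟙 _))
  have : Mono φ.τ₃ := inferInstanceAs (Mono (𝟙 _))
  exact (ShortComplex.exact_iff_of_epi_of_isIso_of_mono φ).2 hS

theorem exact_comp_mono {S : ShortComplex C} (hS : S.Exact) {Y : C} (i : S.X₃ ⟶ Y) [Mono i] :
    (ShortComplex.mk S.f (S.g ≫ i) (by simp)).Exact := by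
  let φ : S ⟶ ShortComplex.mk S.f (S.g ≫ i) (by simp) := { τ₁ := 𝟙 _, τ₂ := 𝟙 _, τ₃ := i }
  have : Epi φ.τ₁ := inferInstanceAs (Epi (𝟙 _))
  have : IsIso φ.τ₂ := inferInstanceAs (IsIso (𝟙 _))
  have : Mono φ.τ₃ := ‹Mono i›
  exact (ShortComplex.exact_iff_of_epi_of_isIso_of_mono φ).1 hS

theorem exactAt_succ_augment {K : ChainComplex C ℕ} {X : C} {f : K.X 0 ⟶ X}
    {w : K.d 1 0 ≫ f = 0} (h₀ : (ShortComplex.mk _ _ w).Exact) (h : ∀ n, K.ExactAt (n + 1)) :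
    ∀ n, (K.augment f w).ExactAt (n + 1)
  | 0 => by
    rw [HomologicalComplex.exactAt_iff' _ 2 1 0 (by simp) (by simp)]
    exact h₀
  | n + 1 => by
    rw [HomologicalComplex.exactAt_iff' _ (n + 3) (n + 2) (n + 1) (by simp) (by simp)]
    exact (HomologicalComplex.exactAt_iff' _ (n + 2) (n + 1) n (by simp) (by simp)).1 (h n)

end HasZeroMorphisms

variable {C : Type*} [Category C] [Abelian C]

theorem quasiIso_toSingle₀Equiv_symm {K : ChainComplex C ℕ} {X : C} {ε : K.X 0 ⟶ X}
    {w : K.d 1 0 ≫ ε = 0} (hε : Epi ε) (h₀ : (ShortComplex.mk _ _ w).Exact)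
    (h : ∀ n, K.ExactAt (n + 1)) :
    QuasiIso ((ChainComplex.toSingle₀Equiv K X).symm ⟨ε, w⟩) where
  quasiIsoAt
    | 0 => by
      rw [ChainComplex.quasiIsoAt₀_iff,
        ShortComplex.quasiIso_iff_of_zeros' _ (K.shape 0 0 (by simp)) rfl rfl]
      refine (ShortComplex.exact_and_epi_g_iff_of_iso ?_).2 ⟨h₀, hε⟩
      exact ShortComplex.isoMk (Iso.refl _) (Iso.refl _) (Iso.refl _)
        ((Category.id_comp _).trans (Category.comp_id _).symm)
        ((Category.id_comp _).trans ((Category.comp_id _).trans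
          (ChainComplex.toSingle₀Equiv_symm_apply_f_zero ε w)).symm)
    | n + 1 => by
      rw [quasiIsoAt_iff_exactAt' _ _ (ChainComplex.exactAt_succ_single_obj _ _)]
      exact h n

/-- The augmentation `P₀ ⟶ Z` of a projective resolution of `Z`: the degree zero part of `P.π`,
retyped so that its target is `Z` rather than the degree zero term of the single complex. -/
noncomputable def augmentation {Z : C} (P : ProjectiveResolution Z) : P.complex.X 0 ⟶ Z :=
  P.π.f 0

instance epi_augmentation {Z : C} (P : ProjectiveResolution Z) : Epi (augmentation P) :=
  inferInstanceAs (Epi (P.π.f 0))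

theorem d_comp_augmentation {Z : C} (P : ProjectiveResolution Z) :
    P.complex.d 1 0 ≫ augmentation P = 0 :=
  P.complex_d_comp_π_f_zero

theorem d_comp_augmentation_comp {Z Y : C} (P : ProjectiveResolution Z) (f : Z ⟶ Y) :
    P.complex.d 1 0 ≫ augmentation P ≫ f = 0 := by
  rw [← Category.assoc, d_comp_augmentation, zero_comp]

theorem exact_d_augmentation {Z : C} (P : ProjectiveResolution Z) :
    (ShortComplex.mk _ _ (d_comp_augmentation P)).Exact :=
  P.exact₀

/-- The Yoneda splice of a short exact sequence `0 ⟶ X₁ ⟶ X₂ ⟶ X₃ ⟶ 0` with `X₂` projective and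
a projective resolution of `X₁`: the resolution `⋯ ⟶ P₁ ⟶ P₀ ⟶ X₂` of `X₃`. -/
noncomputable def spliceProjectiveResolution {S : ShortComplex C} (hS : S.ShortExact)
    [Projective S.X₂] (P : ProjectiveResolution S.X₁) : ProjectiveResolution S.X₃ where
  complex := P.complex.augment (augmentation P ≫ S.f) (d_comp_augmentation_comp P S.f)
  projective
    | 0 => ‹Projective S.X₂›
    | n + 1 => P.projective n
  π := (ChainComplex.toSingle₀Equiv _ _).symm ⟨S.g,
    show (augmentation P ≫ S.f) ≫ S.g = 0 by rw [Category.assoc, S.zero, comp_zero]⟩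
  quasiIso :=
    have := hS.mono_f
    quasiIso_toSingle₀Equiv_symm hS.epi_g (exact_epi_comp hS.exact (augmentation P))
      (exactAt_succ_augment (exact_comp_mono (exact_d_augmentation P) S.f) P.complex_exactAt_succ)

variable (R : Type*) [Ring R] [Linear R C]

/-- Augmenting a chain complex shifts the cohomology of its dual `Hom(-, Y)` by one in positive
degrees. -/
noncomputable def homologyLinearYonedaObjAugmentIso (K : ChainComplex C ℕ) {X : C} (f : K.X 0 ⟶ X)
    (w : K.d 1 0 ≫ f = 0) (Y : C) (n : ℕ) :
    ((K.augment f w).linearYonedaObj R Y).homology (n + 2) ≅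
      (K.linearYonedaObj R Y).homology (n + 1) :=
  ShortComplex.homologyMapIso
    (HomologicalComplex.isoSc' ((K.augment f w).linearYonedaObj R Y) (n + 1) (n + 2) (n + 3)
        (by simp) (by simp) ≪≫
      (HomologicalComplex.isoSc' (K.linearYonedaObj R Y) n (n + 1) (n + 2)
        (by simp) (by simp)).symm)

/-- Dimension shifting along a short exact sequence `0 ⟶ X₁ ⟶ X₂ ⟶ X₃ ⟶ 0` with `X₂`
projective. -/
noncomputable def extSuccIsoOfShortExact [EnoughProjectives C] {S : ShortComplex C}
    (hS : S.ShortExact) [Projective S.X₂] (Y : C) (n : ℕ) :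
    ((Ext R C (n + 2)).obj (.op S.X₃)).obj Y ≅ ((Ext R C (n + 1)).obj (.op S.X₁)).obj Y :=
  let P := projectiveResolution S.X₁
  (spliceProjectiveResolution hS P).isoExt (n + 2) Y ≪≫
    homologyLinearYonedaObjAugmentIso R P.complex _ (d_comp_augmentation_comp P S.f) Y n ≪≫
    (P.isoExt (n + 1) Y).symm

end DimensionShift

theorem IsGVTorsion.of_injective {R : Type u} [CommRing R] {M N : Type u} [AddCommGroup M]
    [Module R M] [AddCommGroup N] [Module R N] (hN : IsGVTorsion R N) {f : M →ₗ[R] N}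
    (hf : Function.Injective f) : IsGVTorsion R M := by
  intro x
  obtain ⟨J, hJ, hJx⟩ := hN (f x)
  refine ⟨J, hJ, fun j hj => hf ?_⟩
  rw [map_smul, hJx j hj, map_zero]

/-- Over a coherent ring, `A` is absolutely `w`-pure iff `Ext^{n+1}_R(N, A)` is
GV-torsion for every finitely presented `N` and every `n ≥ 0`. -/
theorem isAbsolutelyWPure_iff_ext_gvTorsion (R : Type u) [CommRing R]
    (hR : IsCoherentRing R) (A : Type u) [AddCommGroup A] [Module R A] :
    IsAbsolutelyWPure R A ↔
      ∀ (N : Type u) [AddCommGroup N] [Module R N], Module.FinitePresentation R N →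
        ∀ n : ℕ, IsGVTorsion R (extMod R N A (n + 1)) := by
  refine ⟨fun hA N _ _ hN n => ?_, fun h N _ _ hN => h N hN 0⟩
  induction n generalizing N with
  | zero => exact hA N hN
  | succ n ih =>
    obtain ⟨k, f, hf⟩ := Module.Finite.exists_fin' R N
    have hker : Module.FinitePresentation R (LinearMap.ker f) :=
      IsPseudoCoherent.pi (fun _ => hR) _ (Module.FinitePresentation.fg_ker f hf)
    have : Projective f.shortComplexKer.X₂ := ModuleCat.projective_of_free (Pi.basisFun R (Fin k))
    let e := extSuccIsoOfShortExact R (LinearMap.shortExact_shortComplexKer hf) (.of R A) n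
    exact (ih (LinearMap.ker f) _ _ hker).of_injective e.toLinearEquiv.injective
end
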